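/- Let 𝔞 be a cofinite monomial ideal in k[x₁,…,x_d] and let c > d−1 be a real number. Then m(c) > 0 if and only if m(c+1) > 0; that is, c is a jumping number of 𝔞 if and only if c+1 is a jumping number of 𝔞. (Monomial case of Proposition 3.6: periodicity of jumping numbers beyond d−1.) -/

import Mathlib

open Set Filter Pointwise MeasureTheory

/-- The map sending a vector of natural number exponents to the corresponding
real vector. -/
noncomputable def expToReal (d : ℕ) (v : Fin d → ℕ) : Fin d → ℝ := fun i => (v i : ℝ)

/-- The Newton polyhedron of a monomial ideal with exponent set `S`:
the convex hull in `ℝ^d` of the exponent vectors. -/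
noncomputable def newtonPoly (d : ℕ) (S : Set (Fin d → ℕ)) : Set (Fin d → ℝ) :=
  convexHull ℝ (expToReal d '' S)

/-- The multiplicity `m(c)` of `c > 0` as a (candidate) jumping number of the monomial
ideal with exponent set `S`: the number of `v ∈ ℕ^d` with `v + 𝟏` on the boundary part
`c•P(𝔞) \ int(c•P(𝔞))` of the dilated Newton polyhedron. -/
noncomputable def multJump (d : ℕ) (S : Set (Fin d → ℕ)) (c : ℝ) : ℕ :=
  Nat.card {v : Fin d → ℕ |
    expToReal d v + 1 ∈ c • newtonPoly d S \ interior (c • newtonPoly d S)}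

/-!
Choose a linear functional supporting `c • P` at a boundary point `v + 𝟏`, and let `F` be the set of
exponents of `S` at which it is extremal. Then `v + 𝟏` lies in `c • conv F`, and conversely every
lattice point of this form lies on the boundary of `c • P`. Adding a point of `F` therefore leads
from `c` to `c + 1`. In the other direction, `F` lies in a hyperplane, so by Carathéodory a point of
`(c + 1) • conv F` is a positive combination of at most `d < c + 1` points of `F` with total weight
`c + 1`. Some weight exceeds `1`, and subtracting the corresponding point leads from `c + 1` to `c`.
-/

section LinearlyOrderedField

variable {𝕜 E : Type*} [Field 𝕜] [LinearOrder 𝕜] [IsStrictOrderedRing 𝕜] [AddCommGroup E]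
  [Module 𝕜 E]

theorem mem_convexHull_sep_eq_of_forall_le {s : Set E} {x : E} (f : E →ₗ[𝕜] 𝕜)
    (hx : x ∈ convexHull 𝕜 s) (hf : ∀ y ∈ s, f y ≤ f x) :
    x ∈ convexHull 𝕜 {y ∈ s | f y = f x} := by
  obtain ⟨ι, _, z, w, hz, -, hw, hsum, rfl⟩ := eq_pos_convex_span_of_mem_convexHull hx
  set x := ∑ i, w i • z i with hx_def
  have hzs (i : ι) : z i ∈ s := hz (mem_range_self i)
  have hsum_eq : ∑ i, w i * f (z i) = ∑ i, w i * f x := by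
    rw [← Finset.sum_mul, hsum, one_mul, hx_def, map_sum]
    simp only [map_smul, smul_eq_mul]
  have hfz (i : ι) : f (z i) = f x := by
    have hterm := (Finset.sum_eq_sum_iff_of_le fun i _ =>
      mul_le_mul_of_nonneg_left (hf _ (hzs i)) (hw i).le).1 hsum_eq i (Finset.mem_univ i)
    exact mul_left_cancel₀ (hw i).ne' hterm
  exact (convex_convexHull 𝕜 _).sum_mem (fun i _ => (hw i).le) hsum
    fun i _ => subset_convexHull 𝕜 _ ⟨hzs i, hfz i⟩

theorem sum_smul_mem_smul_of_convex {ι : Type*} [Fintype ι] {C : Set E} (hC : Convex 𝕜 C)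
    {z : ι → E} {w : ι → 𝕜} (hz : ∀ i, z i ∈ C) (hw : ∀ i, 0 ≤ w i) (hsum : 0 < ∑ i, w i) :
    ∑ i, w i • z i ∈ (∑ i, w i) • C := by
  rw [mem_smul_set_iff_inv_smul_mem₀ hsum.ne']
  exact hC.centerMass_mem (fun i _ => hw i) hsum fun i _ => hz i

theorem exists_sub_mem_smul_convexHull {F : Set E} [FiniteDimensional 𝕜 (vectorSpan 𝕜 F)] {c : 𝕜}
    (hc : Module.finrank 𝕜 (vectorSpan 𝕜 F) < c) {x : E} (hx : x ∈ (c + 1) • convexHull 𝕜 F) :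
    ∃ z ∈ F, x - z ∈ c • convexHull 𝕜 F := by
  classical
  have hc0 : 0 < c := (Nat.cast_nonneg _).trans_lt hc
  obtain ⟨p, hp, rfl⟩ := hx
  obtain ⟨ι, _, z, w, hz, hind, hw, hsum, rfl⟩ := eq_pos_convex_span_of_mem_convexHull hp
  have hzF (i : ι) : z i ∈ F := hz (mem_range_self i)
  have hcard : (Fintype.card ι : 𝕜) < c + 1 := by
    have hnat : Fintype.card ι ≤ Module.finrank 𝕜 (vectorSpan 𝕜 F) + 1 :=
      hind.card_le_finrank_succ.trans
        (Nat.succ_le_succ (Submodule.finrank_mono (vectorSpan_mono 𝕜 hz)))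
    calc (Fintype.card ι : 𝕜) ≤ Module.finrank 𝕜 (vectorSpan 𝕜 F) + 1 := mod_cast hnat
      _ < c + 1 := by gcongr
  obtain ⟨i, -, hi⟩ : ∃ i ∈ Finset.univ, 1 < (c + 1) * w i :=
    Finset.exists_lt_of_sum_lt (by simpa [← Finset.mul_sum, hsum] using hcard)
  let w' : ι → 𝕜 := fun j => (c + 1) * w j - Pi.single (M := fun _ => 𝕜) i 1 j
  have hw' (j : ι) : 0 ≤ w' j := by
    obtain rfl | hj := eq_or_ne j i
    · simpa [w'] using hi.le
    · simpa [w', hj] using mul_nonneg (by positivity) (hw j).le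
  have hsum' : ∑ j, w' j = c := by simp [w', ← Finset.mul_sum, hsum]
  have hcomb : ∑ j, w' j • z j = (c + 1) • ∑ j, w j • z j - z i := by
    simp [w', sub_smul, mul_smul, Finset.smul_sum, Pi.single_apply, ite_smul]
  refine ⟨z i, hzF i, ?_⟩
  simpa only [hcomb, hsum'] using sum_smul_mem_smul_of_convex (convex_convexHull 𝕜 F)
    (fun j => subset_convexHull 𝕜 F (hzF j)) hw' (hsum' ▸ hc0)

theorem map_nonneg_of_mem_smul_convexHull {F : Set E} {c : 𝕜} (hc : 0 ≤ c) {x : E}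
    (hx : x ∈ c • convexHull 𝕜 F) {g : E →ₗ[𝕜] 𝕜} (hg : ∀ y ∈ F, 0 ≤ g y) : 0 ≤ g x := by
  obtain ⟨p, hp, rfl⟩ := hx
  have hgp : 0 ≤ g p := convexHull_min hg (convex_halfSpace_ge g.isLinear 0) hp
  simpa using mul_nonneg hc hgp

theorem exists_sub_mem_smul_convexHull_and_pos {F : Set E}
    [FiniteDimensional 𝕜 (vectorSpan 𝕜 F)] {c : 𝕜}
    (hc : Module.finrank 𝕜 (vectorSpan 𝕜 F) < c) {x : E} (hx : x ∈ (c + 1) • convexHull 𝕜 F) :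
    ∃ z ∈ F, x - z ∈ c • convexHull 𝕜 F ∧
      ∀ g : E →ₗ[𝕜] 𝕜, (∀ y ∈ F, 0 ≤ g y) → 0 < g x → 0 < g (x - z) := by
  -- Subtracting `z` from a slight contraction of `x` leaves a positive multiple of `x` to spare.
  obtain ⟨b, hb, hbc⟩ := exists_between hc
  have hb0 : 0 < b := (Nat.cast_nonneg _).trans_lt hb
  obtain ⟨p, hp, rfl⟩ := hx
  obtain ⟨z, hz, hsub⟩ := exists_sub_mem_smul_convexHull hb (smul_mem_smul_set hp)
  have hsplit : (c + 1) • p - z = ((b + 1) • p - z) + (c - b) • p := by module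
  refine ⟨z, hz, ?_, fun g hg hgx => ?_⟩
  · rw [hsplit, ← add_sub_cancel b c, (convex_convexHull 𝕜 F).add_smul hb0.le (sub_pos.2 hbc).le,
      add_sub_cancel]
    exact add_mem_add hsub (smul_mem_smul_set hp)
  · have hgp : 0 < g p :=
      pos_of_mul_pos_right (by simpa using hgx) (by linarith : (0 : 𝕜) ≤ c + 1)
    rw [hsplit, map_add, map_smul, smul_eq_mul]
    exact add_pos_of_nonneg_of_pos (map_nonneg_of_mem_smul_convexHull hb0.le hsub hg)
      (mul_pos (sub_pos.2 hbc) hgp)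

end LinearlyOrderedField

section SupportFace

theorem notMem_interior_of_forall_le {E : Type*} [AddCommGroup E] [TopologicalSpace E]
    [ContinuousAdd E] [Module ℝ E] [ContinuousSMul ℝ E] {C : Set E} {x : E} {f : StrongDual ℝ E}
    (hf : f ≠ 0) (hmax : ∀ y ∈ C, f y ≤ f x) : x ∉ interior C := fun hx => by
  have hfx : f x ∈ interior (f '' C) :=
    (f.isOpenMap_of_ne_zero hf).image_interior_subset C (mem_image_of_mem f hx)
  have hsub : f '' C ⊆ Iic (f x) := forall_mem_image.2 fun y hy => mem_Iic.2 (hmax y hy)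
  have hIio : f x ∈ Iio (f x) := interior_Iic.subset (interior_mono hsub hfx)
  exact lt_irrefl _ (mem_Iio.1 hIio)

variable {E : Type*} [NormedAddCommGroup E] [NormedSpace ℝ E] {s F : Set E}

theorem exists_ne_zero_forall_le_of_notMem_interior [FiniteDimensional ℝ E] {C : Set E}
    (hC : Convex ℝ C) {x : E} (hxC : x ∈ C) (hx : x ∉ interior C) :
    ∃ f : StrongDual ℝ E, f ≠ 0 ∧ ∀ y ∈ C, f y ≤ f x := by
  by_cases hint : (interior C).Nonempty
  · exact geometric_hahn_banach_of_nonempty_interior_point hC hx hint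
  -- `C` spans a proper affine subspace, on which some nonzero functional is constant.
  have hspan : vectorSpan ℝ C < ⊤ := by
    rwa [lt_top_iff_ne_top, ← direction_affineSpan, Ne,
      AffineSubspace.direction_eq_top_iff_of_nonempty ⟨x, mem_affineSpan ℝ hxC⟩,
      ← hC.interior_nonempty_iff_affineSpan_eq_top]
  obtain ⟨f, hf, hker⟩ := (vectorSpan ℝ C).exists_le_ker_of_lt_top hspan
  refine ⟨f.toContinuousLinearMap, by simpa using hf, fun y hy => ?_⟩
  have hfyx : f (y - x) = 0 := hker (vsub_mem_vectorSpan ℝ hy hxC)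
  exact (sub_eq_zero.1 ((map_sub f y x).symm.trans hfyx)).le

/-- `F` is the part of `s` lying on a hyperplane that has all of `s` on one side. Neither `F = ∅`
nor `F = s` is excluded. -/
def IsSupportFace (s F : Set E) : Prop :=
  ∃ f : StrongDual ℝ E, f ≠ 0 ∧ ∃ r, (∀ y ∈ s, f y ≤ r) ∧ F = {y ∈ s | f y = r}

theorem IsSupportFace.subset (hF : IsSupportFace s F) : F ⊆ s := by
  obtain ⟨f, -, r, -, rfl⟩ := hF
  exact sep_subset _ _

theorem IsSupportFace.finrank_vectorSpan_lt [FiniteDimensional ℝ E] (hF : IsSupportFace s F) :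
    Module.finrank ℝ (vectorSpan ℝ F) < Module.finrank ℝ E := by
  obtain ⟨f, hf, r, -, rfl⟩ := hF
  have hker : vectorSpan ℝ {y ∈ s | f y = r} ≤ f.toLinearMap.ker := by
    rw [vectorSpan_def, Submodule.span_le]
    rintro _ ⟨y, ⟨-, hy⟩, z, ⟨-, hz⟩, rfl⟩
    simp [hy, hz]
  have hne : f.toLinearMap.ker ≠ ⊤ := fun htop =>
    hf (ContinuousLinearMap.coe_injective (LinearMap.ker_eq_top.1 htop))
  exact (Submodule.finrank_mono hker).trans_lt (Submodule.finrank_lt hne)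

theorem mem_convexHull_sdiff_interior_iff [FiniteDimensional ℝ E] {x : E} :
    x ∈ convexHull ℝ s \ interior (convexHull ℝ s) ↔
      ∃ F, IsSupportFace s F ∧ x ∈ convexHull ℝ F := by
  constructor
  · rintro ⟨hx, hxint⟩
    obtain ⟨f, hf, hmax⟩ :=
      exists_ne_zero_forall_le_of_notMem_interior (convex_convexHull ℝ s) hx hxint
    have hmax' (y : E) (hy : y ∈ s) : f y ≤ f x := hmax y (subset_convexHull ℝ s hy)
    exact ⟨_, ⟨f, hf, f x, hmax', rfl⟩, mem_convexHull_sep_eq_of_forall_le f.toLinearMap hx hmax'⟩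
  · rintro ⟨F, hF, hx⟩
    have hxs : x ∈ convexHull ℝ s := convexHull_mono hF.subset hx
    obtain ⟨f, hf, r, hr, rfl⟩ := hF
    have hle : convexHull ℝ s ⊆ {y | f y ≤ r} :=
      convexHull_min hr (convex_halfSpace_le f.toLinearMap.isLinear r)
    have hfx : f x = r :=
      convexHull_min (fun _ hy => hy.2) (convex_hyperplane f.toLinearMap.isLinear r) hx
    exact ⟨hxs, notMem_interior_of_forall_le hf fun y hy => (hle hy).trans hfx.ge⟩

theorem mem_smul_convexHull_sdiff_interior_iff [FiniteDimensional ℝ E] {c : ℝ} (hc : c ≠ 0)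
    {x : E} :
    x ∈ c • convexHull ℝ s \ interior (c • convexHull ℝ s) ↔
      ∃ F, IsSupportFace s F ∧ x ∈ c • convexHull ℝ F := by
  rw [interior_smul₀ hc, ← smul_set_sdiff₀ hc]
  simp only [mem_smul_set_iff_inv_smul_mem₀ hc, mem_convexHull_sdiff_interior_iff]

end SupportFace

section JumpingExponents

variable {d : ℕ} {S : Set (Fin d → ℕ)} {c : ℝ}

/-- The exponents counted by `multJump d S c`; for `c > 0` and `S` the exponent set of a monomial
ideal, `c` is a jumping number exactly when this set is nonempty. -/
def jumpingExponents (S : Set (Fin d → ℕ)) (c : ℝ) : Set (Fin d → ℕ) :=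
  {v | expToReal d v + 1 ∈ c • newtonPoly d S \ interior (c • newtonPoly d S)}

theorem mem_jumpingExponents_iff (hc : c ≠ 0) {v : Fin d → ℕ} :
    v ∈ jumpingExponents S c ↔
      ∃ F, IsSupportFace (expToReal d '' S) F ∧ expToReal d v + 1 ∈ c • convexHull ℝ F :=
  mem_smul_convexHull_sdiff_interior_iff hc

theorem expToReal_nonneg (v : Fin d → ℕ) : 0 ≤ expToReal d v := fun i => Nat.cast_nonneg (v i)

theorem expToReal_add (v w : Fin d → ℕ) :
    expToReal d (v + w) = expToReal d v + expToReal d w :=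
  funext fun i => Nat.cast_add (v i) (w i)

theorem exists_add_mem_jumpingExponents (hc : 0 < c) {v : Fin d → ℕ}
    (hv : v ∈ jumpingExponents S c) : ∃ a ∈ S, v + a ∈ jumpingExponents S (c + 1) := by
  obtain ⟨F, hF, hvF⟩ := (mem_jumpingExponents_iff hc.ne').1 hv
  obtain ⟨z, hz⟩ : F.Nonempty := convexHull_nonempty_iff.1 (smul_set_nonempty.1 ⟨_, hvF⟩)
  obtain ⟨a, ha, rfl⟩ := hF.subset hz
  refine ⟨a, ha, (mem_jumpingExponents_iff (by positivity)).2 ⟨F, hF, ?_⟩⟩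
  rw [expToReal_add, add_right_comm, (convex_convexHull ℝ F).add_smul hc.le zero_le_one, one_smul]
  exact add_mem_add hvF (subset_convexHull ℝ F hz)

theorem exists_sub_mem_jumpingExponents (hc : (d : ℝ) - 1 < c) {u : Fin d → ℕ}
    (hu : u ∈ jumpingExponents S (c + 1)) :
    ∃ a ∈ S, a ≤ u ∧ u - a ∈ jumpingExponents S c := by
  have hc1 : 0 < c + 1 := d.cast_nonneg.trans_lt (sub_lt_iff_lt_add.1 hc)
  obtain ⟨F, hF, huF⟩ := (mem_jumpingExponents_iff hc1.ne').1 hu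
  have hdim : (Module.finrank ℝ (vectorSpan ℝ F) : ℝ) < c := by
    have hlt : Module.finrank ℝ (vectorSpan ℝ F) + 1 ≤ d := by
      simpa using hF.finrank_vectorSpan_lt
    exact (le_sub_iff_add_le.2 (mod_cast hlt)).trans_lt hc
  obtain ⟨z, hz, hsub, hpos⟩ := exists_sub_mem_smul_convexHull_and_pos hdim huF
  obtain ⟨a, ha, rfl⟩ := hF.subset hz
  have hau : a ≤ u := fun i => by
    have hcoord : (0 : ℝ) < u i + 1 - a i := by
      refine hpos (LinearMap.proj i) (fun y hy => ?_) (Nat.cast_add_one_pos (u i))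
      obtain ⟨b, -, rfl⟩ := hF.subset hy
      exact expToReal_nonneg b i
    have hlt : (a i : ℝ) < u i + 1 := sub_pos.1 hcoord
    exact Nat.lt_succ_iff.1 (mod_cast hlt)
  have hcancel : expToReal d (u - a) + expToReal d a = expToReal d u := by
    rw [← expToReal_add, tsub_add_cancel_of_le hau]
  have hc0 : 0 < c := (Nat.cast_nonneg _).trans_lt hdim
  refine ⟨a, ha, hau, (mem_jumpingExponents_iff hc0.ne').2 ⟨F, hF, ?_⟩⟩
  rwa [← hcancel, add_right_comm, add_sub_cancel_right] at hsub

end JumpingExponents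

section Finiteness

variable {d : ℕ} {S : Set (Fin d → ℕ)} {c : ℝ}

theorem convexHull_range_natCast : convexHull ℝ (range ((↑) : ℕ → ℝ)) = Ici 0 := by
  have hnonneg : range ((↑) : ℕ → ℝ) ⊆ Ici 0 :=
    range_subset_iff.2 fun n => mem_Ici.2 n.cast_nonneg
  refine (convexHull_min hnonneg (convex_Ici 0)).antisymm fun x hx => ?_
  obtain ⟨n, hn⟩ := exists_nat_ge x
  have hmem (m : ℕ) : (m : ℝ) ∈ convexHull ℝ (range ((↑) : ℕ → ℝ)) :=
    subset_convexHull ℝ _ (mem_range_self m)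
  exact (convex_convexHull ℝ _).ordConnected.out (mod_cast hmem 0) (hmem n) ⟨hx, hn⟩

theorem convexHull_range_expToReal : convexHull ℝ (range (expToReal d)) = Ici 0 := by
  have hrange : range (expToReal d) = univ.pi fun _ => range ((↑) : ℕ → ℝ) :=
    range_piMap fun (_ : Fin d) (n : ℕ) => (n : ℝ)
  rw [hrange, convexHull_pi, convexHull_range_natCast]
  exact pi_univ_Ici 0

theorem isUpperSet_newtonPoly (hS : ∀ v ∈ S, ∀ w : Fin d → ℕ, v + w ∈ S) :
    IsUpperSet (newtonPoly d S) := fun x y hxy hx => by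
  have hadd : expToReal d '' S + range (expToReal d) ⊆ expToReal d '' S := by
    rintro _ ⟨_, ⟨v, hv, rfl⟩, _, ⟨w, rfl⟩, rfl⟩
    exact ⟨v + w, hS v hv w, expToReal_add v w⟩
  have hdiff : y - x ∈ convexHull ℝ (range (expToReal d)) := by
    rw [convexHull_range_expToReal]
    exact sub_nonneg.2 hxy
  rw [← add_sub_cancel x y]
  exact convexHull_mono hadd ((convexHull_add _ _).symm.subset (add_mem_add hx hdiff))

theorem exists_single_mem_of_finite_compl (hcof : Sᶜ.Finite) (i : Fin d) :
    ∃ n : ℕ, Pi.single i n ∈ S := by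
  by_contra! h
  exact infinite_of_injective_forall_mem (Pi.single_injective i) h hcof

theorem le_of_mem_jumpingExponents (hS : ∀ v ∈ S, ∀ w : Fin d → ℕ, v + w ∈ S) (hc : 0 < c)
    {i : Fin d} {n : ℕ} (hn : Pi.single i n ∈ S) {v : Fin d → ℕ} (hv : v ∈ jumpingExponents S c) :
    (v i : ℝ) + 1 ≤ c * n := by
  by_contra! hlt
  -- Otherwise `c⁻¹ • (v + 𝟏)` is strictly above the point `n • eᵢ` of the upper set `P`.
  refine hv.2 ?_
  rw [interior_smul₀ hc.ne', mem_smul_set_iff_inv_smul_mem₀ hc.ne']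
  refine (isUpperSet_newtonPoly hS).mem_interior_of_forall_lt
    (subset_closure (subset_convexHull ℝ _ (mem_image_of_mem _ hn))) fun j => ?_
  change ((Pi.single i n : Fin d → ℕ) j : ℝ) < c⁻¹ * (v j + 1)
  obtain rfl | hj := eq_or_ne j i
  · rwa [Pi.single_eq_same, lt_inv_mul_iff₀ hc]
  · rw [Pi.single_eq_of_ne hj, Nat.cast_zero]
    positivity

theorem finite_jumpingExponents (hS : ∀ v ∈ S, ∀ w : Fin d → ℕ, v + w ∈ S) (hcof : Sᶜ.Finite)
    (hc : 0 < c) : (jumpingExponents S c).Finite := by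
  choose n hn using exists_single_mem_of_finite_compl hcof
  refine (finite_Iic fun i => ⌊c * n i⌋₊).subset fun v hv i => Nat.le_floor ?_
  linarith [le_of_mem_jumpingExponents hS hc (hn i) hv]

theorem multJump_pos_iff (hS : ∀ v ∈ S, ∀ w : Fin d → ℕ, v + w ∈ S) (hcof : Sᶜ.Finite)
    (hc : 0 < c) : 0 < multJump d S c ↔ (jumpingExponents S c).Nonempty :=
  ncard_pos (finite_jumpingExponents hS hcof hc)

end Finiteness

theorem jumping_numbers_periodic_general {d : ℕ} (hd : 1 ≤ d) (S : Set (Fin d → ℕ)) {c : ℝ}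
    (hc : (d : ℝ) - 1 < c) :
    (jumpingExponents S c).Nonempty ↔ (jumpingExponents S (c + 1)).Nonempty := by
  have hc0 : 0 < c := (sub_nonneg.2 (mod_cast hd)).trans_lt hc
  constructor
  · rintro ⟨v, hv⟩
    obtain ⟨a, -, hva⟩ := exists_add_mem_jumpingExponents hc0 hv
    exact ⟨v + a, hva⟩
  · rintro ⟨u, hu⟩
    obtain ⟨a, -, -, hua⟩ := exists_sub_mem_jumpingExponents hc hu
    exact ⟨u - a, hua⟩

/-- Monomial case of Proposition 3.6: for a cofinite monomial ideal and `c > d - 1`,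
`c` is a jumping number iff `c + 1` is a jumping number. -/
theorem jumping_numbers_periodic (d : ℕ) (hd : 1 ≤ d) (k : Type*) [Field k]
    (S : Set (Fin d → ℕ)) (hS : ∀ v ∈ S, ∀ w : Fin d → ℕ, v + w ∈ S)
    (hcof : (Sᶜ : Set (Fin d → ℕ)).Finite)
    (c : ℝ) (hc : (d : ℝ) - 1 < c) :
    0 < multJump d S c ↔ 0 < multJump d S (c + 1) := by
  have hc0 : 0 < c := (sub_nonneg.2 (mod_cast hd)).trans_lt hc
  rw [multJump_pos_iff hS hcof hc0, multJump_pos_iff hS hcof (by positivity),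
    jumping_numbers_periodic_general hd S hc]
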